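/- Let p be a prime, n ≥ 1, let M be a finite abelian p-group acted on by automorphisms by a cyclic group ⟨φ⟩ of order p^n, let q be a prime different from p, and let V be a finite module over the prime field 𝔽_q for the semidirect product M ⋊ ⟨φ⟩ on which M acts faithfully. Then the order of the subgroup [M, φ^{p^{n-1}}] is at most |C_V(φ)|^{p^n}. -/

import Mathlib

/-- The subgroup `[M, ψ]` generated by all commutators `x⁻¹ · ψ(x)`. -/
def commutatorWithAut {M : Type*} [Group M] (ψ : MulAut M) : Subgroup M :=
  Subgroup.closure {y : M | ∃ x : M, y = x⁻¹ * ψ x}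

open Module TensorProduct

lemma aux_reps {G X : Type*} [Group G] (a : G → X → X) (h1 : ∀ x, a 1 x = x)
    (hm : ∀ g h x, a (g * h) x = a g (a h x)) :
    ∃ T : Set X, (∀ x, ∃ g, ∃ t ∈ T, x = a g t) ∧
      ∀ t ∈ T, ∀ t' ∈ T, ∀ g, a g t = t' → t = t' := by
  let s : Setoid X :=
    { r := fun x y => ∃ g, a g x = y
      iseqv :=
        { refl := fun x => ⟨1, h1 x⟩
          symm := by
            rintro x y ⟨g, rfl⟩
            exact ⟨g⁻¹, by rw [← hm, inv_mul_cancel, h1]⟩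
          trans := by
            rintro x y z ⟨g, rfl⟩ ⟨h, rfl⟩
            exact ⟨h * g, hm _ _ _⟩ } }
  refine ⟨Set.range (Quotient.out (s := s)), fun x => ?_, ?_⟩
  · obtain ⟨g, hg⟩ := Quotient.mk_out (s := s) x
    exact ⟨g, _, ⟨_, rfl⟩, hg.symm⟩
  · rintro _ ⟨x, rfl⟩ _ ⟨y, rfl⟩ g hg
    have : x = y := by
      rw [← Quotient.out_eq x, ← Quotient.out_eq y]
      exact Quotient.sound ⟨g, hg⟩
    rw [this]

lemma aux_core {K V M G : Type*} [Field K] [AddCommGroup V] [Module K V] [FiniteDimensional K V]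
    [CommGroup M] [Fintype M] [Group G] [Fintype G] (act : G →* MulAut M)
    (μ : Representation K M V) (τ : Representation K G V)
    (hc : ∀ g m, τ g * μ m = μ (act g m) * τ g)
    [HasEnoughRootsOfUnity K (Monoid.exponent M)] (hM : (Fintype.card M : K) ≠ 0)
    (f : Module.End K V) (z : G) (hz : ∀ g : G, g ≠ 1 → z ∈ Subgroup.zpowers g)
    (hf : ∀ χ : M →* Kˣ, (∀ m, χ (act z m) = χ m) →
      ∀ v, (∀ m, μ m v = (χ m : K) • v) → f v = 0) (gen : G) :
    finrank K (LinearMap.range f) ≤ Fintype.card G * finrank K (LinearMap.ker (τ gen - 1)) := by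
  classical
  have hX : Finite (M →* Kˣ) := by
    obtain ⟨e⟩ := CommGroup.monoidHom_mulEquiv_of_hasEnoughRootsOfUnity M K
    exact Finite.of_equiv _ e.symm.toEquiv
  have : Fintype (M →* Kˣ) := Fintype.ofFinite _
  have hcard : Fintype.card (M →* Kˣ) = Fintype.card M := by
    rw [← Nat.card_eq_fintype_card, ← Nat.card_eq_fintype_card,
      CommGroup.card_monoidHom_of_hasEnoughRootsOfUnity]
  let a : G → (M →* Kˣ) → (M →* Kˣ) := fun g χ => χ.comp (act g⁻¹).toMonoidHom
  have ha : ∀ g χ m, a g χ m = χ (act g⁻¹ m) := fun _ _ _ => rfl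
  let e : (M →* Kˣ) → Module.End K V := fun χ =>
    (Fintype.card M : K)⁻¹ • ∑ m : M, (χ m⁻¹ : K) • μ m
  have he : ∀ χ, e χ = (Fintype.card M : K)⁻¹ • ∑ m : M, (χ m⁻¹ : K) • μ m := fun _ => rfl
  have h1 : ∀ m χ, μ m * e χ = (χ m : K) • e χ := by
    intro m χ
    rw [he, mul_smul_comm, smul_comm, Finset.mul_sum]
    congr 1
    rw [Finset.smul_sum]
    refine Fintype.sum_equiv (Equiv.mulLeft m) _ _ fun x => ?_
    simp only [Equiv.coe_mulLeft, mul_smul_comm, smul_smul, ← map_mul]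
    congr 1
    rw [← Units.val_mul, ← map_mul]
    congr 2
    simp
  have h1' : ∀ g χ, τ g * e χ = e (a g χ) * τ g := by
    intro g χ
    rw [he, he, mul_smul_comm, smul_mul_assoc, Finset.mul_sum, Finset.sum_mul]
    congr 1
    refine Fintype.sum_equiv (act g).toEquiv _ _ fun x => ?_
    simp [ha, hc]
  have h2 : ∑ χ, e χ = 1 := by
    simp only [he]
    rw [← Finset.smul_sum, Finset.sum_comm]
    simp only [← Finset.sum_smul]
    rw [Finset.sum_eq_single 1]
    · simp [hcard, smul_smul, hM]
    · intro m _ hm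
      obtain ⟨χ₀, h⟩ := CommGroup.exists_apply_ne_one_of_hasEnoughRootsOfUnity M K
        (inv_ne_one.mpr hm)
      have : ∑ χ : M →* Kˣ, (χ m⁻¹ : K) = 0 := by
        have h3 : (χ₀ m⁻¹ : K) * ∑ χ : M →* Kˣ, (χ m⁻¹ : K) = ∑ χ : M →* Kˣ, (χ m⁻¹ : K) := by
          rw [Finset.mul_sum]
          exact Fintype.sum_equiv (Equiv.mulLeft χ₀) _ _ fun x => by simp
        by_contra h4
        apply h
        ext
        simpa using mul_right_cancel₀ h4 (h3.trans (one_mul _).symm)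
      rw [this, zero_smul]
    · simp
  have h3 : ∀ χ χ', e χ * e χ' = if χ = χ' then e χ' else 0 := by
    intro χ χ'
    have h4 : e χ * e χ' = ((Fintype.card M : K)⁻¹ * ∑ m, ((χ⁻¹ * χ') m : K)) • e χ' := by
      rw [he χ, smul_mul_assoc, Finset.sum_mul, mul_smul, Finset.sum_smul]
      congr 1
      refine Finset.sum_congr rfl fun m _ => ?_
      rw [smul_mul_assoc, h1, smul_smul]
      simp
    rw [h4]
    split_ifs with h
    · simp [h, hM]
    · have : ∑ m, ((χ⁻¹ * χ') m : K) = 0 := by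
        have h5 : (Units.coeHom K).comp (χ⁻¹ * χ') ≠ 1 := by
          intro h5
          apply h
          have : χ⁻¹ * χ' = 1 := by
            ext m
            exact DFunLike.congr_fun h5 m
          exact inv_mul_eq_one.mp this
        exact sum_hom_units_eq_zero _ h5
      rw [this, mul_zero, zero_smul]
  obtain ⟨T, hT1, hT2⟩ := aux_reps a (by intro x; ext m; simp [ha])
    (by intro g h x; ext m; simp [ha])
  let Ω : Set (M →* Kˣ) := {χ | ¬ ∀ m, χ (act z m) = χ m}
  have hstab : ∀ χ ∈ Ω, ∀ g, a g χ = χ → g = 1 := by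
    intro χ hχ g hg
    by_contra hne
    apply hχ
    let S : Subgroup G :=
      { carrier := {g | ∀ m, χ (act g m) = χ m}
        mul_mem' := by
          intro x y hx hy m
          replace hx : ∀ m, χ (act x m) = χ m := hx
          replace hy : ∀ m, χ (act y m) = χ m := hy
          rw [map_mul, MulAut.mul_apply, hx, hy]
        one_mem' := by intro m; simp
        inv_mem' := by
          intro x hx m
          replace hx : ∀ m, χ (act x m) = χ m := hx
          rw [← hx (act x⁻¹ m), ← MulAut.mul_apply, ← map_mul]
          simp }
    have hS : g⁻¹ ∈ S := fun m => by rw [← ha, hg]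
    have : Subgroup.zpowers g ≤ S := by
      rw [Subgroup.zpowers_le]
      simpa using S.inv_mem hS
    exact this (hz g hne)
  have hΩ : ∀ g χ, a g χ ∈ Ω → χ ∈ Ω := by
    intro g χ h h'
    apply h
    intro m
    rcases eq_or_ne g 1 with rfl | hg
    · simp [ha, h']
    · obtain ⟨k, rfl⟩ := Subgroup.mem_zpowers_iff.mp (hz g hg)
      rw [ha, ha, ← MulAut.mul_apply, ← map_mul]
      rw [show g⁻¹ * g ^ k = g ^ k * g⁻¹ by group, map_mul, MulAut.mul_apply, h']
  let E : Module.End K V := ∑ t with t ∈ T ∧ t ∈ Ω, e t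
  have hE : E = ∑ t with t ∈ T ∧ t ∈ Ω, e t := rfl
  have hEe : ∀ t, t ∈ T → t ∈ Ω → E * e t = e t := by
    intro t ht ht'
    rw [hE, Finset.sum_mul, Finset.sum_eq_single t]
    · simp [h3]
    · intro b _ hb
      simp [h3, hb]
    · simp [ht, ht']
  have hEE : E * E = E := by
    conv_lhs => rw [hE]; arg 2; rw [← hE]
    conv_lhs => arg 2; rw [hE]
    rw [Finset.mul_sum, hE]
    exact Finset.sum_congr rfl fun t ht => by
      simp only [Finset.mem_filter] at ht
      exact hEe t ht.2.1 ht.2.2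
  have hEgE : ∀ g, g ≠ 1 → E * τ g * E = 0 := by
    intro g hg
    simp only [hE]
    rw [Finset.mul_sum]
    refine Finset.sum_eq_zero fun t ht => ?_
    rw [Finset.sum_mul, Finset.sum_mul]
    refine Finset.sum_eq_zero fun t' ht' => ?_
    simp only [Finset.mem_filter, Finset.mem_univ, true_and] at ht ht'
    rw [mul_assoc, h1', ← mul_assoc, h3, if_neg, zero_mul]
    intro h
    have h6 := hT2 t ht.1 t' ht'.1 g h.symm
    subst h6
    exact hg (hstab t ht.2 g h.symm)
  clear_value E
  -- the two rank bounds
  have hA : finrank K (LinearMap.range f) ≤ Fintype.card G * finrank K (LinearMap.range E) := by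
    let Φ : (G → LinearMap.range E) →ₗ[K] V :=
      ∑ g, (f ∘ₗ τ g ∘ₗ (LinearMap.range E).subtype ∘ₗ LinearMap.proj g)
    have hΦ : LinearMap.range f ≤ LinearMap.range Φ := by
      rintro _ ⟨v, rfl⟩
      have : f v = ∑ χ, f (e χ v) := by
        rw [← map_sum, ← LinearMap.sum_apply, h2]; rfl
      rw [this]
      refine Submodule.sum_mem _ fun χ _ => ?_
      by_cases hχ : χ ∈ Ω
      · obtain ⟨g, t, ht, rfl⟩ := hT1 χ
        have ht' := hΩ g t hχ
        refine ⟨Pi.single g ⟨e t (τ g⁻¹ v), ⟨e t (τ g⁻¹ v), ?_⟩⟩, ?_⟩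
        · exact LinearMap.congr_fun (hEe t ht ht') _
        · simp only [Φ, LinearMap.sum_apply]
          rw [Finset.sum_eq_single g]
          · simp only [LinearMap.comp_apply, LinearMap.proj_apply, Pi.single_eq_same,
              Submodule.subtype_apply]
            congr 1
            have := LinearMap.congr_fun (h1' g t) (τ g⁻¹ v)
            simp only [Module.End.mul_apply] at this
            rw [this, ← Module.End.mul_apply, ← Module.End.mul_apply, mul_assoc, ← map_mul]
            simp
          · intro b _ hb
            simp [Pi.single_eq_of_ne hb]
          · simp
      · have : f (e χ v) = 0 := by
          refine hf χ (not_not.mp hχ) _ fun m => ?_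
          exact LinearMap.congr_fun (h1 m χ) v
        rw [this]; exact zero_mem _
    calc _ ≤ finrank K (LinearMap.range Φ) := Submodule.finrank_mono hΦ
      _ ≤ finrank K (G → LinearMap.range E) := LinearMap.finrank_range_le Φ
      _ = _ := by
        rw [Module.finrank_pi_fintype, Finset.sum_const, Finset.card_univ, smul_eq_mul]
  have hB : finrank K (LinearMap.range E) ≤ finrank K (LinearMap.ker (τ gen - 1)) := by
    let N : Module.End K V := ∑ g, τ g
    have hNd : N = ∑ g, τ g := rfl
    clear_value N
    have hN : ∀ v, (τ gen - 1) (N v) = 0 := by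
      intro v
      have : τ gen * N = N := by
        rw [hNd, Finset.mul_sum]
        exact Fintype.sum_equiv (Equiv.mulLeft gen) _ _ fun x => by simp
      rw [LinearMap.sub_apply, ← Module.End.mul_apply, this]
      simp
    have hENE : E * N * E = E := by
      rw [hNd, Finset.mul_sum, Finset.sum_mul, Finset.sum_eq_single 1]
      · simp [hEE]
      · exact fun g _ hg => hEgE g hg
      · simp
    let Ψ : LinearMap.range E →ₗ[K] LinearMap.ker (τ gen - 1) :=
      (N ∘ₗ (LinearMap.range E).subtype).codRestrict _ fun v => hN v
    refine LinearMap.finrank_le_finrank_of_injective (f := Ψ) ?_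
    rw [← LinearMap.ker_eq_bot, LinearMap.ker_eq_bot']
    rintro ⟨_, ⟨v, rfl⟩⟩ h
    have h7 : N (E v) = 0 := congrArg Subtype.val h
    ext
    have := LinearMap.congr_fun hENE v
    simp only [Module.End.mul_apply, h7, map_zero] at this
    exact this.symm
  exact hA.trans (Nat.mul_le_mul_left _ hB)

lemma aux_rank_range {F K V : Type*} [Field F] [Field K] [Algebra F K] [AddCommGroup V]
    [Module F V] [FiniteDimensional F V] (f : Module.End F V) :
    finrank K (LinearMap.range (f.baseChange K)) = finrank F (LinearMap.range f) := by
  have h : f.baseChange K = (LinearMap.range f).subtype.baseChange K ∘ₗ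
      f.rangeRestrict.baseChange K := by
    rw [← LinearMap.baseChange_comp]; rfl
  have hs : LinearMap.range (f.rangeRestrict.baseChange K) = ⊤ := by
    rw [LinearMap.range_eq_top]
    exact LinearMap.lTensor_surjective K f.surjective_rangeRestrict
  have hi : Function.Injective ((LinearMap.range f).subtype.baseChange K) :=
    Module.Flat.lTensor_preserves_injective_linearMap (M := K) _ (Submodule.subtype_injective _)
  rw [h, LinearMap.range_comp_of_range_eq_top _ hs, LinearMap.finrank_range_of_inj hi,
    Module.finrank_baseChange]

lemma aux_rank_ker {F K V : Type*} [Field F] [Field K] [Algebra F K] [AddCommGroup V]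
    [Module F V] [FiniteDimensional F V] (f : Module.End F V) :
    finrank K (LinearMap.ker (f.baseChange K)) = finrank F (LinearMap.ker f) := by
  have h1 := LinearMap.finrank_range_add_finrank_ker f
  have h2 := LinearMap.finrank_range_add_finrank_ker (f.baseChange K)
  rw [aux_rank_range, Module.finrank_baseChange] at h2
  omega

/-- the averaging operator -/
noncomputable def auxAvg {F V A : Type*} [Field F] [AddCommGroup V] [Module F V] [Group A]
    [Fintype A] (ρ : Representation F A V) : Module.End F V :=
  (Fintype.card A : F)⁻¹ • ∑ a, ρ a

lemma auxAvg_mul {F V A : Type*} [Field F] [AddCommGroup V] [Module F V] [Group A]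
    [Fintype A] (ρ : Representation F A V) (a : A) : auxAvg ρ * ρ a = auxAvg ρ := by
  rw [auxAvg, smul_mul_assoc, Finset.sum_mul]
  congr 1
  exact Fintype.sum_equiv (Equiv.mulRight a) _ _ fun x => by simp

lemma mul_auxAvg {F V A : Type*} [Field F] [AddCommGroup V] [Module F V] [Group A]
    [Fintype A] (ρ : Representation F A V) (a : A) : ρ a * auxAvg ρ = auxAvg ρ := by
  rw [auxAvg, mul_smul_comm, Finset.mul_sum]
  congr 1
  exact Fintype.sum_equiv (Equiv.mulLeft a) _ _ fun x => by simp

lemma auxAvg_fixed {F V A : Type*} [Field F] [AddCommGroup V] [Module F V] [Group A]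
    [Fintype A] (ρ : Representation F A V) (hA : (Fintype.card A : F) ≠ 0) (v : V)
    (h : ∀ a, ρ a v = v) : auxAvg ρ v = v := by
  simp only [auxAvg, LinearMap.smul_apply, LinearMap.sum_apply, h]
  rw [Finset.sum_const, Finset.card_univ, ← Nat.cast_smul_eq_nsmul F, smul_smul,
    inv_mul_cancel₀ hA, one_smul]

lemma aux_regular {F V A : Type*} [Field F] [AddCommGroup V] [Module F V] [CommGroup A]
    [Finite A] (ρ : Representation F A V) (hA : (Nat.card A : F) ≠ 0) :
    ∃ w, ∀ a, ρ a w = w → ρ a = 1 := by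
  classical
  have := Fintype.ofFinite A
  let st : V → Subgroup A := fun w =>
    { carrier := {a | ρ a w = w}
      mul_mem' := by
        intro x y hx hy
        simp only [Set.mem_ofPred_eq] at hx hy ⊢
        rw [map_mul, Module.End.mul_apply, hy, hx]
      one_mem' := by simp
      inv_mem' := by
        intro x hx
        simp only [Set.mem_ofPred_eq] at hx ⊢
        conv_lhs => rw [← hx]
        rw [← Module.End.mul_apply, ← map_mul]
        simp }
  have hst : ∀ w a, a ∈ st w ↔ ρ a w = w := fun _ _ => Iff.rfl
  obtain ⟨w, hw⟩ := WellFounded.has_min (wellFounded_lt (α := Subgroup A)) (Set.range st) ⟨_, 0, rfl⟩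
  obtain ⟨⟨w, rfl⟩, hmin⟩ := hw
  refine ⟨w, fun a ha => ?_⟩
  let S := st w
  let σ : Representation F S V := ρ.comp S.subtype
  have hS : (Fintype.card S : F) ≠ 0 := by
    intro h
    apply hA
    obtain ⟨k, hk⟩ := S.card_subgroup_dvd_card
    rw [hk, Nat.card_eq_fintype_card (α := S), Nat.cast_mul, h, zero_mul]
  let e := auxAvg σ
  have hcomm : ∀ b v, e (ρ b v) = ρ b (e v) := by
    intro b v
    have : e * ρ b = ρ b * e := by
      simp only [e, auxAvg]
      rw [smul_mul_assoc, mul_smul_comm, Finset.mul_sum, Finset.sum_mul]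
      congr 1
      refine Finset.sum_congr rfl fun s _ => ?_
      simp only [σ, MonoidHom.comp_apply, ← map_mul]
      rw [mul_comm]
    exact LinearMap.congr_fun this v
  have hew : e w = w := auxAvg_fixed σ hS w fun s => s.2
  have hee : ∀ v, e (e v) = e v := fun v =>
    auxAvg_fixed σ hS _ fun s => LinearMap.congr_fun (mul_auxAvg σ s) v
  ext u
  have hew' : e (w + (u - e u)) = w := by simp [hew, hee]
  have hle : st (w + (u - e u)) ≤ S := by
    intro b hb
    rw [hst] at hb
    change ρ b w = w
    conv_lhs => rw [← hew', ← hcomm, hb, hew']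
  have heq : st (w + (u - e u)) = S := by
    by_contra hne
    exact hmin _ ⟨_, rfl⟩ (lt_of_le_of_ne hle hne)
  have hfix : e (u - e u) = u - e u := by
    refine auxAvg_fixed σ hS _ fun s => ?_
    have h1 : (s : A) ∈ st (w + (u - e u)) := by rw [heq]; exact s.2
    rw [hst, map_add, show ρ (s : A) w = w from s.2] at h1
    exact add_left_cancel h1
  rw [map_sub, hee, sub_self] at hfix
  have hu : u = e u := sub_eq_zero.mp hfix.symm
  have := LinearMap.congr_fun (mul_auxAvg σ ⟨a, ha⟩) u
  simp only [Module.End.mul_apply] at this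
  change ρ a (e u) = e u at this
  rw [← hu] at this
  simpa using this

lemma aux_card_le {F V A : Type*} [Field F] [AddCommGroup V] [Module F V] [Finite V] [CommGroup A]
    [Fintype A] (ρ : Representation F A V) (hA : (Nat.card A : F) ≠ 0)
    (hinj : Function.Injective ρ) :
    Nat.card A ≤ Nat.card (LinearMap.range (1 - auxAvg ρ)) := by
  obtain ⟨w, hw⟩ := aux_regular ρ hA
  refine Nat.card_le_card_of_injective
    (fun a => (⟨ρ a w - w, ⟨ρ a w - w, ?_⟩⟩ : LinearMap.range (1 - auxAvg ρ))) ?_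
  · have := LinearMap.congr_fun (auxAvg_mul ρ a) w
    simp only [Module.End.mul_apply] at this
    simp [this]
  · intro a b h
    have h1 : ρ a w = ρ b w := sub_left_injective (congrArg Subtype.val h)
    have h2 : ρ (b⁻¹ * a) w = w := by
      rw [map_mul, Module.End.mul_apply, h1, ← Module.End.mul_apply, ← map_mul]
      simp
    have h3 := hw _ h2
    rw [← map_one ρ] at h3
    exact (inv_mul_eq_one.mp (hinj h3)).symm

lemma aux_zpowers {G : Type*} [Group G] (φ : G) (p n : ℕ) (hp : p.Prime) (hn : 1 ≤ n)
    (ho : orderOf φ = p ^ n) (g : G) (hg : g ∈ Subgroup.zpowers φ) (hg1 : g ≠ 1) :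
    φ ^ p ^ (n - 1) ∈ Subgroup.zpowers g := by
  obtain ⟨k, rfl⟩ := Subgroup.mem_zpowers_iff.mp hg
  obtain ⟨i, hi, hik⟩ := (Nat.dvd_prime_pow hp).mp (Int.gcd_dvd_natAbs_right k (p ^ n : ℕ))
  have hin : i ≠ n := by
    rintro rfl
    apply hg1
    rw [← orderOf_dvd_iff_zpow_eq_one, ho, ← hik]
    exact Int.gcd_dvd_left ..
  have h1 : φ ^ p ^ i ∈ Subgroup.zpowers (φ ^ k) := by
    refine Subgroup.mem_zpowers_iff.mpr ⟨Int.gcdA k (p ^ n : ℕ), ?_⟩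
    have hb := Int.gcd_eq_gcd_ab k (p ^ n : ℕ)
    rw [hik] at hb
    rw [← zpow_natCast φ (p ^ i), hb, zpow_add, zpow_mul, zpow_mul φ ((p ^ n : ℕ) : ℤ),
      zpow_natCast φ (p ^ n), ← ho, pow_orderOf_eq_one]
    simp
  have h2 : p ^ (n - 1) = p ^ i * p ^ (n - 1 - i) := by
    rw [← pow_add]; congr 1; omega
  rw [h2, pow_mul]
  exact Subgroup.pow_mem _ h1 _

theorem card_commutator_with_aut_le_card_fixed_points_pow :
    ∀ (p n q : ℕ), p.Prime → 1 ≤ n → q.Prime → q ≠ p →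
      ∀ (M : Type) [CommGroup M] [Finite M], IsPGroup p M →
        ∀ φ : MulAut M, orderOf φ = p ^ n →
          ∀ (V : Type) [AddCommGroup V] [Module (ZMod q) V] [Finite V],
            ∀ ρ : Representation (ZMod q)
                (M ⋊[(Subgroup.zpowers φ).subtype] ↥(Subgroup.zpowers φ)) V,
              -- `M` acts faithfully on `V`
              Function.Injective (fun x : M => ρ (SemidirectProduct.inl x)) →
              Nat.card ↥(commutatorWithAut (φ ^ p ^ (n - 1))) ≤
                Nat.card {v : V //
                  ρ (SemidirectProduct.inr ⟨φ, Subgroup.mem_zpowers φ⟩) v = v} ^ (p ^ n) := by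
  intro p n q hp hn hq hqp M _ _ hM φ ho V _ _ _ ρ hρ
  classical
  have : Fact q.Prime := ⟨hq⟩
  have : Fact p.Prime := ⟨hp⟩
  have := Fintype.ofFinite M
  have : Finite (Subgroup.zpowers φ) := by
    apply Nat.finite_of_card_ne_zero
    rw [Nat.card_zpowers, ho]
    exact pow_ne_zero _ hp.ne_zero
  have := Fintype.ofFinite (Subgroup.zpowers φ)
  let F := ZMod q
  let K := AlgebraicClosure F
  let G := Subgroup.zpowers φ
  let A := commutatorWithAut (φ ^ p ^ (n - 1))
  have := Fintype.ofFinite A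
  have hdvd : ∀ k : ℕ, k ∣ Nat.card M → (k : F) ≠ 0 := by
    intro k hk h
    obtain ⟨r, hr⟩ := hM.exists_card_eq
    rw [hr] at hk
    have h1 : q ∣ k := (ZMod.natCast_eq_zero_iff k q).mp h
    exact hqp ((Nat.prime_dvd_prime_iff_eq hq hp).mp (hq.dvd_of_dvd_pow (h1.trans hk)))
  have hdvdK : ∀ k : ℕ, k ∣ Nat.card M → (k : K) ≠ 0 := by
    intro k hk h
    apply hdvd k hk
    apply (algebraMap F K).injective
    rw [map_natCast, map_zero, h]
  have : NeZero ((Monoid.exponent M : ℕ) : F) := ⟨hdvd _ Group.exponent_dvd_nat_card⟩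
  have : HasEnoughRootsOfUnity K (Monoid.exponent M) :=
    AlgebraicClosure.hasEnoughRootsOfUnity F _
  have hcA : Nat.card A ∣ Nat.card M := A.card_subgroup_dvd_card
  let z : G := ⟨φ ^ p ^ (n - 1), Subgroup.pow_mem _ (Subgroup.mem_zpowers φ) _⟩
  let μ₀ : Representation F M V := ρ.comp SemidirectProduct.inl
  let τ₀ : Representation F G V := ρ.comp SemidirectProduct.inr
  let σ₀ : Representation F A V := μ₀.comp A.subtype
  let B : Module.End F V →* Module.End K (K ⊗[F] V) :=
    { toFun := fun f => f.baseChange K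
      map_one' := LinearMap.baseChange_id
      map_mul' := fun f g => LinearMap.baseChange_comp g f }
  have hB : ∀ f, B f = f.baseChange K := fun _ => rfl
  let μ : Representation K M (K ⊗[F] V) := B.comp μ₀
  let τ : Representation K G (K ⊗[F] V) := B.comp τ₀
  let gen : G := ⟨φ, Subgroup.mem_zpowers φ⟩
  have hσinj : Function.Injective σ₀ := fun a b h => Subtype.ext (hρ h)
  have hstep1 : Nat.card A ≤ Nat.card (LinearMap.range (1 - auxAvg σ₀)) :=
    aux_card_le σ₀ (hdvd _ hcA) hσinj
  have hstep2 : finrank K (LinearMap.range ((1 - auxAvg σ₀).baseChange K)) ≤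
      Fintype.card G * finrank K (LinearMap.ker (τ gen - 1)) := by
    refine aux_core (Subgroup.zpowers φ).subtype μ τ ?_ ?_ _ z ?_ ?_ gen
    · intro g m
      change B (τ₀ g) * B (μ₀ m) = B (μ₀ _) * B (τ₀ g)
      rw [← map_mul, ← map_mul]
      congr 1
      change ρ _ * ρ _ = ρ _ * ρ _
      rw [← map_mul, ← map_mul, SemidirectProduct.inl_aut]
      simp [mul_assoc]
    · rw [← Nat.card_eq_fintype_card]
      exact hdvdK _ dvd_rfl
    · rintro ⟨g, hg⟩ hg1
      have := aux_zpowers φ p n hp hn ho g hg (fun h => hg1 (Subtype.ext h))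
      obtain ⟨k, hk⟩ := Subgroup.mem_zpowers_iff.mp this
      exact Subgroup.mem_zpowers_iff.mpr ⟨k, Subtype.ext hk⟩
    · intro χ hχ v hv
      have hA : A ≤ χ.ker := by
        refine (Subgroup.closure_le _).mpr ?_
        rintro _ ⟨x, rfl⟩
        have h1 : χ ((φ ^ p ^ (n - 1)) x) = χ x := hχ x
        simp [MonoidHom.mem_ker, h1]
      have hfix : ∀ a : A, (B.comp σ₀) a v = v := by
        intro a
        have h1 : χ (a : M) = 1 := hA a.2
        have h2 := hv a
        rw [h1, Units.val_one, one_smul] at h2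
        exact h2
      have havg : (auxAvg σ₀).baseChange K = auxAvg (B.comp σ₀ : Representation K A (K ⊗[F] V)) := by
        have h1 : ∀ f : Module.End F V, f.baseChange K = LinearMap.baseChangeHom F K V V f :=
          fun _ => rfl
        simp only [auxAvg, MonoidHom.comp_apply, hB, h1, map_smul, map_sum]
        rw [← algebraMap_smul K ((Fintype.card A : F)⁻¹), map_inv₀, map_natCast]
      rw [LinearMap.baseChange_sub, LinearMap.sub_apply, havg, auxAvg_fixed _ _ v hfix]
      · rw [← hB, map_one]; simp
      · rw [← Nat.card_eq_fintype_card]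
        exact hdvdK _ hcA
  have hker : τ gen - 1 = (τ₀ gen - 1).baseChange K := by
    rw [LinearMap.baseChange_sub, ← hB, ← hB, map_one]; rfl
  rw [hker, aux_rank_ker, aux_rank_range, ← Nat.card_eq_fintype_card, Nat.card_zpowers, ho] at hstep2
  have hC : Nat.card {v : V // ρ (SemidirectProduct.inr ⟨φ, Subgroup.mem_zpowers φ⟩) v = v} =
      Nat.card (LinearMap.ker (τ₀ gen - 1)) := by
    refine Nat.card_congr (Equiv.subtypeEquivRight fun v => ?_)
    rw [LinearMap.mem_ker, LinearMap.sub_apply, sub_eq_zero]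
    rfl
  have hcard : ∀ W : Submodule F V, Nat.card W = q ^ finrank F W := by
    intro W
    have := Fintype.ofFinite W
    rw [Nat.card_eq_fintype_card, Module.card_eq_pow_finrank (K := F), ZMod.card]
  rw [hC, hcard, ← pow_mul, mul_comm]
  refine hstep1.trans ?_
  rw [hcard]
  exact Nat.pow_le_pow_right hq.pos hstep2
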